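/- For every q = (q_0,…,q_{m−1}) ∈ (K*)^m, the socle of Λ_q equals the K-span of {a_0 ā_0, …, a_{m−1} ā_{m−1}}, and there is a K-algebra isomorphism Λ_q/soc(Λ_q) ≅ Λ/soc(Λ); that is, Λ_q is a socle deformation of Λ. -/

import Mathlib

open scoped BigOperators

noncomputable section

/-- Generators of the path algebra: trivial paths `e i`, arrows `a i : i → i+1`
and `abar i : i+1 → i`. -/
inductive Gen (m : ℕ) : Type
  | e : ZMod m → Gen m
  | a : ZMod m → Gen m
  | abar : ZMod m → Gen m

/-- The free associative algebra on the generators. -/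
abbrev FA (K : Type) [Field K] (m : ℕ) : Type := FreeAlgebra K (Gen m)

def Ee (K : Type) [Field K] (m : ℕ) (i : ZMod m) : FA K m := FreeAlgebra.ι K (Gen.e i)
def Aa (K : Type) [Field K] (m : ℕ) (i : ZMod m) : FA K m := FreeAlgebra.ι K (Gen.a i)
def Bb (K : Type) [Field K] (m : ℕ) (i : ZMod m) : FA K m := FreeAlgebra.ι K (Gen.abar i)

/-- The defining relations of the path algebra KQ. -/
inductive PathRel (K : Type) [Field K] (m : ℕ) [NeZero m] : FA K m → FA K m → Prop
  | orth : ∀ i j : ZMod m, i ≠ j → PathRel K m (Ee K m i * Ee K m j) 0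
  | idem : ∀ i : ZMod m, PathRel K m (Ee K m i * Ee K m i) (Ee K m i)
  | total : PathRel K m (∑ i : ZMod m, Ee K m i) 1
  | asrc : ∀ i : ZMod m, PathRel K m (Ee K m i * Aa K m i) (Aa K m i)
  | atgt : ∀ i : ZMod m, PathRel K m (Aa K m i * Ee K m (i + 1)) (Aa K m i)
  | bsrc : ∀ i : ZMod m, PathRel K m (Ee K m (i + 1) * Bb K m i) (Bb K m i)
  | btgt : ∀ i : ZMod m, PathRel K m (Bb K m i * Ee K m i) (Bb K m i)

/-- The path algebra KQ. -/
abbrev PathAlg (K : Type) [Field K] (m : ℕ) [NeZero m] : Type := RingQuot (PathRel K m)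

def pe (K : Type) [Field K] (m : ℕ) [NeZero m] (i : ZMod m) : PathAlg K m :=
  RingQuot.mkAlgHom K (PathRel K m) (Ee K m i)
def pa (K : Type) [Field K] (m : ℕ) [NeZero m] (i : ZMod m) : PathAlg K m :=
  RingQuot.mkAlgHom K (PathRel K m) (Aa K m i)
def pb (K : Type) [Field K] (m : ℕ) [NeZero m] (i : ZMod m) : PathAlg K m :=
  RingQuot.mkAlgHom K (PathRel K m) (Bb K m i)

/-- The relations defining `Λ_q`: `a_i a_{i+1} = 0`, `ā_{i-1} ā_{i-2} = 0` and
`q_i a_i ā_i - ā_{i-1} a_{i-1} = 0`. -/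
inductive LamRel (K : Type) [Field K] (m : ℕ) [NeZero m] (q : ZMod m → K) :
    PathAlg K m → PathAlg K m → Prop
  | row : ∀ i : ZMod m, LamRel K m q (pa K m i * pa K m (i + 1)) 0
  | col : ∀ i : ZMod m, LamRel K m q (pb K m (i - 1) * pb K m (i - 2)) 0
  | comm : ∀ i : ZMod m,
      LamRel K m q (q i • (pa K m i * pb K m i) - pb K m (i - 1) * pa K m (i - 1)) 0

/-- The algebra `Λ_q`. -/
abbrev Lam (K : Type) [Field K] (m : ℕ) [NeZero m] (q : ZMod m → K) : Type :=
  RingQuot (LamRel K m q)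

def lamE (K : Type) [Field K] (m : ℕ) [NeZero m] (q : ZMod m → K) (i : ZMod m) :
    Lam K m q := RingQuot.mkAlgHom K (LamRel K m q) (pe K m i)
def lamA (K : Type) [Field K] (m : ℕ) [NeZero m] (q : ZMod m → K) (i : ZMod m) :
    Lam K m q := RingQuot.mkAlgHom K (LamRel K m q) (pa K m i)
def lamB (K : Type) [Field K] (m : ℕ) [NeZero m] (q : ZMod m → K) (i : ZMod m) :
    Lam K m q := RingQuot.mkAlgHom K (LamRel K m q) (pb K m i)

/-- The socle of a ring `R` as a left module over itself: the sum of all its simple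
(= atomic) left submodules. -/
def socAlg (R : Type) [Ring R] : Submodule R R := sSup {S : Submodule R R | IsAtom S}

/-- The quotient of a `K`-algebra `R` by (the two-sided ideal generated by) its left socle. -/
abbrev socQuot (K : Type) [Field K] (R : Type) [Ring R] [Algebra K R] : Type :=
  RingQuot (fun x y : R => x - y ∈ socAlg R)

/-- The relations defining the deformed algebra `Λ̃` associated with scalars `b₁, b₂, t`. -/
inductive TildeRel (K : Type) [Field K] (m : ℕ) [NeZero m] (b1 b2 t : K) :
    PathAlg K m → PathAlg K m → Prop
  | row : ∀ i : ZMod m, TildeRel K m b1 b2 t (pa K m i * pa K m (i + 1)) 0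
  | col : ∀ i : ZMod m, TildeRel K m b1 b2 t (pb K m (i - 1) * pb K m (i - 2)) 0
  | comm : ∀ j : ZMod m, j ≠ 0 →
      TildeRel K m b1 b2 t
        (pa K m j * pb K m j - pb K m (j - 1) * pa K m (j - 1)
          - (t * (-1 : K) ^ (j.val) * b2) • pe K m j) 0
  | comm0 : TildeRel K m b1 b2 t
        ((1 - t * b1) • (pa K m 0 * pb K m 0) - pb K m (-1) * pa K m (-1)
          - (t * b2) • pe K m 0) 0

/-- The deformed algebra `Λ̃`. -/
abbrev Tilde (K : Type) [Field K] (m : ℕ) [NeZero m] (b1 b2 t : K) : Type :=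
  RingQuot (TildeRel K m b1 b2 t)

def tE (K : Type) [Field K] (m : ℕ) [NeZero m] (b1 b2 t : K) (i : ZMod m) :
    Tilde K m b1 b2 t := RingQuot.mkAlgHom K (TildeRel K m b1 b2 t) (pe K m i)
def tA (K : Type) [Field K] (m : ℕ) [NeZero m] (b1 b2 t : K) (i : ZMod m) :
    Tilde K m b1 b2 t := RingQuot.mkAlgHom K (TildeRel K m b1 b2 t) (pa K m i)
def tB (K : Type) [Field K] (m : ℕ) [NeZero m] (b1 b2 t : K) (i : ZMod m) :
    Tilde K m b1 b2 t := RingQuot.mkAlgHom K (TildeRel K m b1 b2 t) (pb K m i)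

section Proof

variable {K : Type} [Field K] {m : ℕ} [NeZero m] {q : ZMod m → K}

/-- Induction principle: a property of elements of `Λ_q` stable under the algebra operations. -/
theorem lam_ind {P : Lam K m q → Prop} (he : ∀ i, P (lamE K m q i)) (ha : ∀ i, P (lamA K m q i))
    (hb : ∀ i, P (lamB K m q i)) (hc : ∀ c : K, P (algebraMap K _ c))
    (hadd : ∀ x y, P x → P y → P (x + y)) (hmul : ∀ x y, P x → P y → P (x * y)) (x : Lam K m q) :
    P x := by
  obtain ⟨y, rfl⟩ := RingQuot.mkAlgHom_surjective K (LamRel K m q) x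
  obtain ⟨z, rfl⟩ := RingQuot.mkAlgHom_surjective K (PathRel K m) y
  induction z using FreeAlgebra.induction with
  | grade0 r => simpa only [AlgHom.commutes] using hc r
  | grade1 g =>
    cases g with
    | e i => exact he i
    | a i => exact ha i
    | abar i => exact hb i
  | mul a b iha ihb => simpa only [map_mul] using hmul _ _ iha ihb
  | add a b iha ihb => simpa only [map_add] using hadd _ _ iha ihb

/-- Lifting an algebra map out of `Λ_q`. -/
theorem lam_lift {R : Type} [Ring R] [Algebra K R] (E A B : ZMod m → R)
    (h1 : ∀ i j, i ≠ j → E i * E j = 0) (h2 : ∀ i, E i * E i = E i) (h3 : ∑ i, E i = 1)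
    (h4 : ∀ i, E i * A i = A i) (h5 : ∀ i, A i * E (i + 1) = A i)
    (h6 : ∀ i, E (i + 1) * B i = B i) (h7 : ∀ i, B i * E i = B i)
    (h8 : ∀ i, A i * A (i + 1) = 0) (h9 : ∀ i, B (i - 1) * B (i - 2) = 0)
    (h10 : ∀ i, q i • (A i * B i) - B (i - 1) * A (i - 1) = 0) :
    ∃ f : Lam K m q →ₐ[K] R, (∀ i, f (lamE K m q i) = E i) ∧ (∀ i, f (lamA K m q i) = A i) ∧
      (∀ i, f (lamB K m q i) = B i) := by
  let f0 : FA K m →ₐ[K] R := FreeAlgebra.lift K (fun g => match g with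
    | Gen.e i => E i
    | Gen.a i => A i
    | Gen.abar i => B i)
  have e0 : ∀ i, f0 (Ee K m i) = E i := fun i => by simp [f0, Ee]
  have a0 : ∀ i, f0 (Aa K m i) = A i := fun i => by simp [f0, Aa]
  have b0 : ∀ i, f0 (Bb K m i) = B i := fun i => by simp [f0, Bb]
  have w0 : ∀ ⦃x y⦄, PathRel K m x y → f0 x = f0 y := by
    intro x y h
    cases h with
    | orth i j h => simp only [map_mul, e0, map_zero, h1 i j h]
    | idem i => simp only [map_mul, e0, h2]
    | total => simp only [map_sum, e0, map_one, h3]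
    | asrc i => simp only [map_mul, e0, a0, h4]
    | atgt i => simp only [map_mul, e0, a0, h5]
    | bsrc i => simp only [map_mul, e0, b0, h6]
    | btgt i => simp only [map_mul, e0, b0, h7]
  let f1 : PathAlg K m →ₐ[K] R := RingQuot.liftAlgHom K ⟨f0, w0⟩
  have e1 : ∀ i, f1 (pe K m i) = E i := fun i => by
    simp only [f1, pe, RingQuot.liftAlgHom_mkAlgHom_apply, e0]
  have a1 : ∀ i, f1 (pa K m i) = A i := fun i => by
    simp only [f1, pa, RingQuot.liftAlgHom_mkAlgHom_apply, a0]
  have b1 : ∀ i, f1 (pb K m i) = B i := fun i => by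
    simp only [f1, pb, RingQuot.liftAlgHom_mkAlgHom_apply, b0]
  have w1 : ∀ ⦃x y⦄, LamRel K m q x y → f1 x = f1 y := by
    intro x y h
    cases h with
    | row i => simp only [map_mul, a1, map_zero, h8]
    | col i => simp only [map_mul, b1, map_zero, h9]
    | comm i => simp only [map_sub, map_smul, map_mul, a1, b1, map_zero, h10]
  refine ⟨RingQuot.liftAlgHom K ⟨f1, w1⟩, fun i => ?_, fun i => ?_, fun i => ?_⟩
  · simp only [lamE, RingQuot.liftAlgHom_mkAlgHom_apply, e1]
  · simp only [lamA, RingQuot.liftAlgHom_mkAlgHom_apply, a1]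
  · simp only [lamB, RingQuot.liftAlgHom_mkAlgHom_apply, b1]

/-! Relations in `Λ_q`. -/

theorem path_rel {x y : FA K m} (h : PathRel K m x y) :
    RingQuot.mkAlgHom K (LamRel K m q) (RingQuot.mkAlgHom K (PathRel K m) x) =
    RingQuot.mkAlgHom K (LamRel K m q) (RingQuot.mkAlgHom K (PathRel K m) y) := by
  rw [RingQuot.mkAlgHom_rel K h]

theorem ee_ne {i j : ZMod m} (h : i ≠ j) : lamE K m q i * lamE K m q j = 0 := by
  have h0 := path_rel (q := q) (PathRel.orth (K := K) i j h)
  simp only [map_mul, map_zero] at h0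
  exact h0
theorem ee_eq (i : ZMod m) : lamE K m q i * lamE K m q i = lamE K m q i := by
  have h0 := path_rel (q := q) (PathRel.idem (K := K) i)
  simp only [map_mul] at h0
  exact h0
theorem e_sum : ∑ i, lamE K m q i = 1 := by
  have h0 := path_rel (q := q) (PathRel.total (K := K) (m := m))
  simp only [map_sum, map_one] at h0
  exact h0
theorem ea_eq (i : ZMod m) : lamE K m q i * lamA K m q i = lamA K m q i := by
  have h0 := path_rel (q := q) (PathRel.asrc (K := K) i)
  simp only [map_mul] at h0
  exact h0
theorem ae_eq (i : ZMod m) : lamA K m q i * lamE K m q (i + 1) = lamA K m q i := by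
  have h0 := path_rel (q := q) (PathRel.atgt (K := K) i)
  simp only [map_mul] at h0
  exact h0
theorem eb_eq (i : ZMod m) : lamE K m q (i + 1) * lamB K m q i = lamB K m q i := by
  have h0 := path_rel (q := q) (PathRel.bsrc (K := K) i)
  simp only [map_mul] at h0
  exact h0
theorem be_eq (i : ZMod m) : lamB K m q i * lamE K m q i = lamB K m q i := by
  have h0 := path_rel (q := q) (PathRel.btgt (K := K) i)
  simp only [map_mul] at h0
  exact h0
theorem aa_eq (i : ZMod m) : lamA K m q i * lamA K m q (i + 1) = 0 := by
  have h0 := RingQuot.mkAlgHom_rel K (LamRel.row (K := K) (q := q) i)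
  simp only [map_mul, map_zero] at h0
  exact h0
theorem bb_eq (i : ZMod m) : lamB K m q (i + 1) * lamB K m q i = 0 := by
  have := RingQuot.mkAlgHom_rel K (LamRel.col (K := K) (q := q) (i + 2))
  rw [show i + 2 - 1 = i + 1 by ring, show i + 2 - 2 = i by ring] at this
  simp only [map_mul, map_zero] at this
  exact this
theorem ba_eq (i : ZMod m) : lamB K m q i * lamA K m q i =
    q (i + 1) • (lamA K m q (i + 1) * lamB K m q (i + 1)) := by
  have := RingQuot.mkAlgHom_rel K (LamRel.comm (K := K) (q := q) (i + 1))
  rw [show i + 1 - 1 = i by ring] at this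
  simp only [map_mul, map_zero, map_sub, map_smul] at this
  exact (sub_eq_zero.mp this).symm

/-- The socle element `a_i ā_i`. -/
def lz (K : Type) [Field K] (m : ℕ) [NeZero m] (q : ZMod m → K) (i : ZMod m) : Lam K m q :=
  lamA K m q i * lamB K m q i

theorem mul_mid_zero {R : Type} [Ring R] {x y e f : R} (hx : x * e = x) (hy : f * y = y)
    (h : e * f = 0) : x * y = 0 := by
  rw [← hx, ← hy, mul_assoc, ← mul_assoc e, h, zero_mul, mul_zero]

theorem Ee_mul (j i : ZMod m) :
    lamE K m q j * lamE K m q i = if i = j then lamE K m q j else 0 := by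
  split_ifs with h
  · rw [h, ee_eq]
  · exact ee_ne (Ne.symm h)
theorem Ea_mul (j i : ZMod m) :
    lamE K m q j * lamA K m q i = if i = j then lamA K m q j else 0 := by
  split_ifs with h
  · rw [h, ea_eq]
  · exact mul_mid_zero (R := Lam K m q) (ee_eq j) (ea_eq i) (ee_ne (Ne.symm h))
theorem Eb_mul (j i : ZMod m) :
    lamE K m q j * lamB K m q (i - 1) = if i = j then lamB K m q (j - 1) else 0 := by
  have h0 := eb_eq (K := K) (q := q) (i - 1)
  rw [sub_add_cancel] at h0
  split_ifs with h
  · rw [← h, h0]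
  · exact mul_mid_zero (R := Lam K m q) (ee_eq j) h0 (ee_ne (Ne.symm h))
theorem Ez_mul (j i : ZMod m) :
    lamE K m q j * lz K m q i = if i = j then lz K m q j else 0 := by
  rw [lz, ← mul_assoc, Ea_mul]
  split_ifs with h
  · rw [h, lz]
  · rw [zero_mul]
theorem Ae_mul (j i : ZMod m) :
    lamA K m q j * lamE K m q i = if i = j + 1 then lamA K m q j else 0 := by
  split_ifs with h
  · rw [h, ae_eq]
  · exact mul_mid_zero (R := Lam K m q) (ae_eq j) (ee_eq i) (ee_ne (Ne.symm h))
theorem Aa_mul (j i : ZMod m) : lamA K m q j * lamA K m q i = 0 := by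
  by_cases h : i = j + 1
  · rw [h, aa_eq]
  · exact mul_mid_zero (R := Lam K m q) (ae_eq j) (ea_eq i) (ee_ne (Ne.symm h))
theorem Ab_mul (j i : ZMod m) :
    lamA K m q j * lamB K m q (i - 1) = if i = j + 1 then lz K m q j else 0 := by
  have h0 := eb_eq (K := K) (q := q) (i - 1)
  rw [sub_add_cancel] at h0
  split_ifs with h
  · rw [h, add_sub_cancel_right, lz]
  · exact mul_mid_zero (R := Lam K m q) (ae_eq j) h0 (ee_ne (Ne.symm h))
theorem Az_mul (j i : ZMod m) : lamA K m q j * lz K m q i = 0 := by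
  rw [lz, ← mul_assoc, Aa_mul, zero_mul]
theorem Be_mul (j i : ZMod m) :
    lamB K m q j * lamE K m q i = if i = j then lamB K m q j else 0 := by
  split_ifs with h
  · rw [h, be_eq]
  · exact mul_mid_zero (R := Lam K m q) (be_eq j) (ee_eq i) (ee_ne (Ne.symm h))
theorem Ba_mul (j i : ZMod m) :
    lamB K m q j * lamA K m q i = if i = j then q (j + 1) • lz K m q (j + 1) else 0 := by
  split_ifs with h
  · rw [h, ba_eq, lz]
  · exact mul_mid_zero (R := Lam K m q) (be_eq j) (ea_eq i) (ee_ne (Ne.symm h))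
theorem Bb_mul (j i : ZMod m) : lamB K m q j * lamB K m q i = 0 := by
  by_cases h : j = i + 1
  · rw [h, bb_eq]
  · exact mul_mid_zero (R := Lam K m q) (be_eq j) (eb_eq i) (ee_ne h)
theorem Bz_mul (j i : ZMod m) : lamB K m q j * lz K m q i = 0 := by
  rw [lz, ← mul_assoc, Ba_mul]
  split_ifs with h
  · rw [h, lz, smul_mul_assoc, mul_assoc, Bb_mul, mul_zero, smul_zero]
  · rw [zero_mul]

/-! The left regular representation, in coordinates. -/

/-- Coordinates with respect to `e_i`, `a_i`, `ā_{i-1}`, `a_i ā_i`. -/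
abbrev LV (K : Type) (m : ℕ) : Type :=
  (ZMod m → K) × (ZMod m → K) × (ZMod m → K) × (ZMod m → K)

def opE (K : Type) [Field K] (m : ℕ) (j : ZMod m) : Module.End K (LV K m) where
  toFun v := (Pi.single j (v.1 j), Pi.single j (v.2.1 j), Pi.single j (v.2.2.1 j),
    Pi.single j (v.2.2.2 j))
  map_add' v w := by simp [Pi.single_add]
  map_smul' c v := by simp [← Pi.single_smul]

def opA (K : Type) [Field K] (m : ℕ) (j : ZMod m) : Module.End K (LV K m) where
  toFun v := (0, Pi.single j (v.1 (j + 1)), 0, Pi.single j (v.2.2.1 (j + 1)))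
  map_add' v w := by simp [Pi.single_add]
  map_smul' c v := by simp [← Pi.single_smul]

def opB (K : Type) [Field K] (m : ℕ) (q : ZMod m → K) (j : ZMod m) :
    Module.End K (LV K m) where
  toFun v := (0, 0, Pi.single (j + 1) (v.1 j), Pi.single (j + 1) (q (j + 1) * v.2.1 j))
  map_add' v w := by simp [Pi.single_add, mul_add]
  map_smul' c v := by simp [← Pi.single_smul, mul_left_comm]

theorem exists_rep (q : ZMod m → K) : ∃ f : Lam K m q →ₐ[K] Module.End K (LV K m),
    (∀ i, f (lamE K m q i) = opE K m i) ∧ (∀ i, f (lamA K m q i) = opA K m i) ∧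
      (∀ i, f (lamB K m q i) = opB K m q i) := by
  apply lam_lift
  · intro i j h
    refine LinearMap.ext fun v => ?_
    simp [opE, h]
  · intro i
    refine LinearMap.ext fun v => ?_
    simp [opE]
  · refine LinearMap.ext fun v => ?_
    rw [LinearMap.sum_apply]
    simp only [opE, LinearMap.coe_mk, AddHom.coe_mk, Module.End.one_apply]
    refine Prod.ext ?_ (Prod.ext ?_ (Prod.ext ?_ ?_)) <;>
      simp only [Prod.fst_sum, Prod.snd_sum, Finset.univ_sum_single]
  · intro i
    refine LinearMap.ext fun v => ?_
    simp [opE, opA]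
  · intro i
    refine LinearMap.ext fun v => ?_
    simp [opE, opA]
  · intro i
    refine LinearMap.ext fun v => ?_
    simp [opE, opB]
  · intro i
    refine LinearMap.ext fun v => ?_
    simp [opE, opB]
  · intro i
    refine LinearMap.ext fun v => ?_
    simp [opA]
  · intro i
    refine LinearMap.ext fun v => ?_
    simp [opB]
  · intro i
    refine LinearMap.ext fun v => ?_
    simp [opA, opB, ← Pi.single_smul]

def rep (q : ZMod m → K) : Lam K m q →ₐ[K] Module.End K (LV K m) := (exists_rep q).choose
theorem rep_e (i : ZMod m) : rep q (lamE K m q i) = opE K m i := (exists_rep q).choose_spec.1 i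
theorem rep_a (i : ZMod m) : rep q (lamA K m q i) = opA K m i := (exists_rep q).choose_spec.2.1 i
theorem rep_b (i : ZMod m) : rep q (lamB K m q i) = opB K m q i :=
  (exists_rep q).choose_spec.2.2 i

/-- The element of `Λ_q` with given coordinates. -/
def lphi (q : ZMod m → K) (v : LV K m) : Lam K m q :=
  ∑ i, v.1 i • lamE K m q i + ∑ i, v.2.1 i • lamA K m q i + ∑ i, v.2.2.1 i • lamB K m q (i - 1) +
    ∑ i, v.2.2.2 i • lz K m q i

theorem lphi_add (v w : LV K m) : lphi q (v + w) = lphi q v + lphi q w := by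
  simp only [lphi, Prod.fst_add, Prod.snd_add, Pi.add_apply, add_smul, Finset.sum_add_distrib]
  abel

theorem lphi_smul (c : K) (v : LV K m) : lphi q (c • v) = c • lphi q v := by
  simp only [lphi, Prod.smul_fst, Prod.smul_snd, Pi.smul_apply, smul_add, Finset.smul_sum,
    smul_assoc]

theorem sum_single_smul (j : ZMod m) (c : K)
    (g : ZMod m → Lam K m q) : ∑ i, (Pi.single j c : ZMod m → K) i • g i = c • g j := by
  rw [Finset.sum_eq_single j]
  · simp
  · intro b _ hb
    simp [hb]
  · simp

theorem lphi_rep (x : Lam K m q) : ∀ v, lphi q (rep q x v) = x * lphi q v := by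
  induction x using lam_ind with
  | he j =>
    intro v
    simp only [rep_e, opE, lphi, LinearMap.coe_mk, AddHom.coe_mk, mul_add, Finset.mul_sum,
      mul_smul_comm, Ee_mul, Ea_mul, Eb_mul, Ez_mul, sum_single_smul, smul_ite, smul_zero,
      Finset.sum_ite_eq', Finset.mem_univ, if_true]
  | ha j =>
    intro v
    simp only [rep_a, opA, lphi, LinearMap.coe_mk, AddHom.coe_mk, mul_add, Finset.mul_sum,
      mul_smul_comm, Ae_mul, Aa_mul, Ab_mul, Az_mul, sum_single_smul, smul_ite, smul_zero,
      Finset.sum_ite_eq', Finset.mem_univ, if_true, Pi.zero_apply, zero_smul,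
      Finset.sum_const_zero, zero_add, add_zero]
  | hb j =>
    intro v
    simp only [rep_b, opB, lphi, LinearMap.coe_mk, AddHom.coe_mk, mul_add, Finset.mul_sum,
      mul_smul_comm, Be_mul, Ba_mul, Bb_mul, Bz_mul, sum_single_smul, smul_ite, smul_zero,
      Finset.sum_ite_eq', Finset.mem_univ, if_true, Pi.zero_apply, zero_smul,
      Finset.sum_const_zero, zero_add, add_zero, add_sub_cancel_right, smul_smul,
      mul_comm (q (j + 1))]
  | hc c =>
    intro v
    rw [AlgHom.commutes, Module.algebraMap_end_apply, lphi_smul, Algebra.smul_def]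
  | hadd x y hx hy =>
    intro v
    rw [map_add, LinearMap.add_apply, lphi_add, hx, hy, add_mul]
  | hmul x y hx hy =>
    intro v
    rw [map_mul, Module.End.mul_apply, hx, hy, mul_assoc]

/-- Coordinates of an element. -/
def lco (x : Lam K m q) : LV K m := rep q x (1, 0, 0, 0)

theorem lphi_one : lphi q ((1, 0, 0, 0) : LV K m) = 1 := by
  simp [lphi, e_sum]

theorem lphi_lco (x : Lam K m q) : lphi q (lco x) = x := by
  rw [lco, lphi_rep, lphi_one, mul_one]

theorem lco_mul (x y : Lam K m q) : lco (x * y) = rep q x (lco y) := by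
  rw [lco, map_mul, Module.End.mul_apply, ← lco]

theorem stable1 (x : Lam K m q) : ∀ v : LV K m, v.1 = 0 → (rep q x v).1 = 0 := by
  induction x using lam_ind with
  | he j => intro v hv; simp [rep_e, opE, hv]
  | ha j => intro v hv; simp [rep_a, opA]
  | hb j => intro v hv; simp [rep_b, opB]
  | hc c => intro v hv; simp [Module.algebraMap_end_apply, hv]
  | hadd x y hx hy => intro v hv; simp [hx v hv, hy v hv]
  | hmul x y hx hy => intro v hv; simpa using hx _ (hy v hv)

theorem stable2 (x : Lam K m q) : ∀ v : LV K m, (v.1 = 0 ∧ v.2.1 = 0 ∧ v.2.2.1 = 0) →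
    ((rep q x v).1 = 0 ∧ (rep q x v).2.1 = 0 ∧ (rep q x v).2.2.1 = 0) := by
  induction x using lam_ind with
  | he j => rintro v ⟨h1, h2, h3⟩; simp [rep_e, opE, h1, h2, h3]
  | ha j => rintro v ⟨h1, h2, h3⟩; simp [rep_a, opA, h1]
  | hb j => rintro v ⟨h1, h2, h3⟩; simp [rep_b, opB, h1]
  | hc c => rintro v ⟨h1, h2, h3⟩; simp [Module.algebraMap_end_apply, h1, h2, h3]
  | hadd x y hx hy =>
    intro v hv
    obtain ⟨h1, h2, h3⟩ := hx v hv
    obtain ⟨k1, k2, k3⟩ := hy v hv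
    simp [h1, h2, h3, k1, k2, k3]
  | hmul x y hx hy => intro v hv; simpa using hx _ (hy v hv)

theorem nil_a (r : Lam K m q) (j : ZMod m) (x : Lam K m q) (h : r * (lamA K m q j * x) = x) :
    x = 0 := by
  have h0 : rep q r (opA K m j (lco x)) = lco x := by
    rw [← rep_a (q := q), ← lco_mul, ← lco_mul, h]
  have h1 : (lco x).1 = 0 := by
    rw [← h0]
    exact stable1 r _ (by simp [opA])
  have h2 : (lco x).1 = 0 ∧ (lco x).2.1 = 0 ∧ (lco x).2.2.1 = 0 := by
    rw [← h0]
    exact stable2 r _ (by simp [opA, h1])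
  have h3 : opA K m j (lco x) = 0 := by
    simp [opA, h2.1, h2.2.2]
  rw [← h, ← lphi_lco (lamA K m q j * x), lco_mul, rep_a, h3]
  simp [lphi]

theorem nil_b (r : Lam K m q) (j : ZMod m) (x : Lam K m q) (h : r * (lamB K m q j * x) = x) :
    x = 0 := by
  have h0 : rep q r (opB K m q j (lco x)) = lco x := by
    rw [← rep_b, ← lco_mul, ← lco_mul, h]
  have h1 : (lco x).1 = 0 := by
    rw [← h0]
    exact stable1 r _ (by simp [opB])
  have h2 : (lco x).1 = 0 ∧ (lco x).2.1 = 0 ∧ (lco x).2.2.1 = 0 := by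
    rw [← h0]
    exact stable2 r _ (by simp [opB, h1])
  have h3 : opB K m q j (lco x) = 0 := by
    simp [opB, h2.1, h2.2.1]
  rw [← h, ← lphi_lco (lamB K m q j * x), lco_mul, rep_b, h3]
  simp [lphi]

theorem atom_kill {R : Type} [Ring R] {S : Submodule R R} (hS : IsAtom S) {g x : R} (hx : x ∈ S)
    (hg : ∀ r, r * (g * x) = x → x = 0) : g * x = 0 := by
  by_contra hne
  have hle : Submodule.span R {g * x} ≤ S :=
    (Submodule.span_singleton_le_iff_mem _ _).mpr (S.smul_mem g hx)
  rcases hS.le_iff.mp hle with h | h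
  · exact hne (Submodule.span_singleton_eq_bot.mp h)
  · rw [← h] at hx
    obtain ⟨r, hr⟩ := Submodule.mem_span_singleton.mp hx
    have := hg r hr
    exact hne (by rw [this, mul_zero])

theorem z_mul (i : ZMod m) (x : Lam K m q) : ∃ c : K, x * lz K m q i = c • lz K m q i := by
  induction x using lam_ind with
  | he j =>
    rw [Ez_mul]
    split_ifs with h
    · exact ⟨1, by rw [h, one_smul]⟩
    · exact ⟨0, by rw [zero_smul]⟩
  | ha j => exact ⟨0, by rw [Az_mul, zero_smul]⟩
  | hb j => exact ⟨0, by rw [Bz_mul, zero_smul]⟩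
  | hc c => exact ⟨c, by rw [Algebra.smul_def]⟩
  | hadd x y hx hy =>
    obtain ⟨c, hc⟩ := hx
    obtain ⟨d, hd⟩ := hy
    exact ⟨c + d, by rw [add_mul, hc, hd, add_smul]⟩
  | hmul x y hx hy =>
    obtain ⟨c, hc⟩ := hx
    obtain ⟨d, hd⟩ := hy
    exact ⟨d * c, by rw [mul_assoc, hd, mul_smul_comm, hc, smul_smul]⟩

theorem z_mem_soc (i : ZMod m) : lz K m q i ∈ socAlg (Lam K m q) := by
  by_cases hz : lz K m q i = 0
  · rw [hz]
    exact Submodule.zero_mem _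
  · have hat : IsAtom (Submodule.span (Lam K m q) {lz K m q i}) := by
      refine ⟨fun h => hz (Submodule.span_singleton_eq_bot.mp h), fun T hT => ?_⟩
      by_contra hne
      obtain ⟨y, hy, hy0⟩ := (Submodule.ne_bot_iff T).mp hne
      obtain ⟨r, hr⟩ := Submodule.mem_span_singleton.mp (hT.le hy)
      obtain ⟨c, hc⟩ := z_mul i r
      rw [smul_eq_mul, hc] at hr
      have hc0 : c ≠ 0 := by
        rintro rfl
        exact hy0 (by rw [← hr, zero_smul])
      refine hT.not_ge ((Submodule.span_singleton_le_iff_mem _ _).mpr ?_)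
      have : lz K m q i = algebraMap K (Lam K m q) c⁻¹ • y := by
        rw [← hr, smul_eq_mul, ← Algebra.smul_def, smul_smul, inv_mul_cancel₀ hc0, one_smul]
      rw [this]
      exact T.smul_mem _ hy
    exact (le_sSup (a := Submodule.span (Lam K m q) {lz K m q i}) hat)
      (Submodule.mem_span_singleton_self _)

/-- The `K`-span of the `a_i ā_i`. -/
abbrev zspan (q : ZMod m → K) : Submodule K (Lam K m q) :=
  Submodule.span K {x : Lam K m q | ∃ i : ZMod m, x = lamA K m q i * lamB K m q i}

theorem z_mem_zspan (i : ZMod m) : lz K m q i ∈ zspan q := Submodule.subset_span ⟨i, rfl⟩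

theorem zspan_mul (r x : Lam K m q) (hx : x ∈ zspan q) : r * x ∈ zspan q := by
  induction hx using Submodule.span_induction with
  | mem x h =>
    obtain ⟨i, rfl⟩ := h
    obtain ⟨c, hc⟩ := z_mul (q := q) i r
    rw [lz] at hc
    rw [hc]
    exact Submodule.smul_mem _ _ (z_mem_zspan i)
  | zero => rw [mul_zero]; exact Submodule.zero_mem _
  | add x y _ _ hx hy => rw [mul_add]; exact Submodule.add_mem _ hx hy
  | smul c x _ hx => rw [mul_smul_comm]; exact Submodule.smul_mem _ _ hx

theorem soc_le (hq : ∀ i, q i ≠ 0) (x : Lam K m q) (hx : x ∈ socAlg (Lam K m q)) :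
    x ∈ zspan q := by
  let W : Submodule (Lam K m q) (Lam K m q) :=
    { carrier := zspan q
      add_mem' := fun h1 h2 => Submodule.add_mem _ h1 h2
      zero_mem' := Submodule.zero_mem _
      smul_mem' := fun r x hx => zspan_mul r x hx }
  have hle : socAlg (Lam K m q) ≤ W := by
    refine sSup_le fun S hS => ?_
    intro y hy
    change y ∈ zspan q
    have ha : ∀ j, opA K m j (lco y) = 0 := fun j => by
      rw [← rep_a (q := q), ← lco_mul, atom_kill hS hy (fun r => nil_a r j y)]
      simp [lco]
    have hb : ∀ j, opB K m q j (lco y) = 0 := fun j => by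
      rw [← rep_b, ← lco_mul, atom_kill hS hy (fun r => nil_b r j y)]
      simp [lco]
    have h1 : ∀ j, (lco y).1 j = 0 := fun j => by
      have := hb j
      simp [opB, Prod.ext_iff] at this
      exact this.1
    have h2 : ∀ j, (lco y).2.1 j = 0 := fun j => by
      have := hb j
      simp [opB, Prod.ext_iff, hq] at this
      exact this.2
    have h3 : ∀ j, (lco y).2.2.1 j = 0 := fun j => by
      have := ha (j - 1)
      simp [opA, Prod.ext_iff] at this
      exact this.2
    rw [← lphi_lco y, lphi]
    simp only [h1, h2, h3, zero_smul, Finset.sum_const_zero, zero_add]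
    exact Submodule.sum_mem _ fun i _ => Submodule.smul_mem _ _ (z_mem_zspan i)
  exact hle hx

theorem soc_eq (hq : ∀ i, q i ≠ 0) :
    Submodule.restrictScalars K (socAlg (Lam K m q)) = zspan q := by
  refine le_antisymm (fun x hx => soc_le hq x hx) (Submodule.span_le.mpr ?_)
  rintro _ ⟨i, rfl⟩
  exact z_mem_soc i

/-- The projection onto the quotient by the socle. -/
abbrev sproj (q : ZMod m → K) : Lam K m q →ₐ[K] socQuot K (Lam K m q) :=
  RingQuot.mkAlgHom K (fun x y : Lam K m q => x - y ∈ socAlg (Lam K m q))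

theorem sproj_soc (x : Lam K m q) (hx : x ∈ socAlg (Lam K m q)) : sproj q x = 0 := by
  have : sproj q x = sproj q 0 :=
    RingQuot.mkAlgHom_rel K (s := fun x y : Lam K m q => x - y ∈ socAlg (Lam K m q))
      (by
        have h0 : x - 0 = x := sub_zero x
        exact h0.symm ▸ hx)
  rw [this, map_zero]

theorem exists_comparison (q p : ZMod m → K) (hq : ∀ i, q i ≠ 0) :
    ∃ f : socQuot K (Lam K m q) →ₐ[K] socQuot K (Lam K m p),
      (∀ i, f (sproj q (lamE K m q i)) = sproj p (lamE K m p i)) ∧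
      (∀ i, f (sproj q (lamA K m q i)) = sproj p (lamA K m p i)) ∧
      (∀ i, f (sproj q (lamB K m q i)) = sproj p (lamB K m p i)) := by
  have hz : ∀ i, sproj p (lamA K m p i * lamB K m p i) = 0 := fun i => sproj_soc _ (z_mem_soc i)
  obtain ⟨f, fe, fa, fb⟩ := lam_lift (q := q) (fun i => sproj p (lamE K m p i))
    (fun i => sproj p (lamA K m p i)) (fun i => sproj p (lamB K m p i))
    (fun i j h => by rw [← map_mul, ee_ne h, map_zero])
    (fun i => by rw [← map_mul, ee_eq])
    (by rw [← map_sum, e_sum, map_one])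
    (fun i => by rw [← map_mul, ea_eq])
    (fun i => by rw [← map_mul, ae_eq])
    (fun i => by rw [← map_mul, eb_eq])
    (fun i => by rw [← map_mul, be_eq])
    (fun i => by rw [← map_mul, aa_eq, map_zero])
    (fun i => by rw [← map_mul, Bb_mul, map_zero])
    (fun i => by
      rw [← map_mul, ← map_mul, hz, ba_eq, map_smul, hz, smul_zero, smul_zero, sub_zero])
  have hf : ∀ x ∈ zspan q, f x = 0 := by
    intro x hx
    induction hx using Submodule.span_induction with
    | mem x h =>
      obtain ⟨i, rfl⟩ := h
      rw [map_mul, fa, fb, ← map_mul, hz]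
    | zero => exact map_zero _
    | add x y _ _ hx hy => rw [map_add, hx, hy, add_zero]
    | smul c x _ hx => rw [map_smul, hx, smul_zero]
  have w : ∀ ⦃x y : Lam K m q⦄, x - y ∈ socAlg (Lam K m q) → f x = f y := by
    intro x y h
    have := hf _ (soc_le hq _ h)
    exact sub_eq_zero.mp ((map_sub f x y).symm.trans this)
  refine ⟨RingQuot.liftAlgHom K ⟨f, w⟩, fun i => ?_, fun i => ?_, fun i => ?_⟩
  · rw [RingQuot.liftAlgHom_mkAlgHom_apply, fe]
  · rw [RingQuot.liftAlgHom_mkAlgHom_apply, fa]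
  · rw [RingQuot.liftAlgHom_mkAlgHom_apply, fb]

theorem sq_ext (f : socQuot K (Lam K m q) →ₐ[K] socQuot K (Lam K m q))
    (he : ∀ i, f (sproj q (lamE K m q i)) = sproj q (lamE K m q i))
    (ha : ∀ i, f (sproj q (lamA K m q i)) = sproj q (lamA K m q i))
    (hb : ∀ i, f (sproj q (lamB K m q i)) = sproj q (lamB K m q i)) :
    f = AlgHom.id K _ := by
  refine AlgHom.ext fun x => ?_
  obtain ⟨y, rfl⟩ := RingQuot.mkAlgHom_surjective K _ x
  rw [AlgHom.id_apply]
  induction y using lam_ind with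
  | he i => exact he i
  | ha i => exact ha i
  | hb i => exact hb i
  | hc c => rw [AlgHom.commutes, AlgHom.commutes]
  | hadd x y hx hy => rw [map_add, map_add, hx, hy]
  | hmul x y hx hy => rw [map_mul, map_mul, hx, hy]

end Proof

/-- for every `q ∈ (K*)^m`, the socle of `Λ_q` is the `K`-span of the
elements `a_i ā_i`, and `Λ_q/soc(Λ_q) ≅ Λ/soc(Λ)` as `K`-algebras; that is, `Λ_q` is a
socle deformation of `Λ = Λ_{(1,…,1)}`. -/
theorem lam_q_socle_deformation
    (K : Type) [Field K] (m : ℕ) [NeZero m] (hm : 1 ≤ m)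
    (q : ZMod m → K) (hq : ∀ i, q i ≠ 0) :
    Submodule.restrictScalars K (socAlg (Lam K m q)) =
        Submodule.span K {x : Lam K m q | ∃ i : ZMod m, x = lamA K m q i * lamB K m q i} ∧
    Nonempty (socQuot K (Lam K m q) ≃ₐ[K] socQuot K (Lam K m (fun _ => 1))) := by
  refine ⟨soc_eq hq, ?_⟩
  obtain ⟨f, fe, fa, fb⟩ := exists_comparison q (fun _ => 1) hq
  obtain ⟨g, ge, ga, gb⟩ := exists_comparison (fun _ => 1) q (fun _ => one_ne_zero)
  refine ⟨AlgEquiv.ofAlgHom f g (sq_ext _ ?_ ?_ ?_) (sq_ext _ ?_ ?_ ?_)⟩ <;> intro i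
  · rw [AlgHom.comp_apply, ge, fe]
  · rw [AlgHom.comp_apply, ga, fa]
  · rw [AlgHom.comp_apply, gb, fb]
  · rw [AlgHom.comp_apply, fe, ge]
  · rw [AlgHom.comp_apply, fa, ga]
  · rw [AlgHom.comp_apply, fb, gb]
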